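/- For real numbers α and β, the sequence (k² + αk + β)_{k=0}^∞ is a Legendre multiplier sequence if and only if α = 1 and 0 ≤ β ≤ 1. -/

import Mathlib

open Polynomial

/-- A real polynomial is *hyperbolic* if all of its complex roots are real
(the zero polynomial and nonzero constants are vacuously hyperbolic). -/
def Hyperbolic (p : Polynomial ℝ) : Prop :=
  ∀ z ∈ (p.map (algebraMap ℝ ℂ)).roots, z.im = 0

/-- `γ` is a multiplier sequence for the simple set `q`: the linear operator
sending `q k` to `γ k • q k` maps hyperbolic polynomials to hyperbolic
polynomials.  (Since `q` is a simple set, every real polynomial has a unique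
expansion `∑ a k • q k`, so this quantification over coefficient families
expresses exactly that property.) -/
def IsMultiplierSeqFor (q : ℕ → Polynomial ℝ) (γ : ℕ → ℝ) : Prop :=
  ∀ (n : ℕ) (a : ℕ → ℝ),
    Hyperbolic (∑ k ∈ Finset.range n, C (a k) * q k) →
    Hyperbolic (∑ k ∈ Finset.range n, C (γ k * a k) * q k)

/-- The Legendre polynomials, via Rodrigues' formula
`Le n = (1/(2^n n!)) Dⁿ[(x²-1)ⁿ]`. -/
noncomputable def legendre (n : ℕ) : Polynomial ℝ :=
  C (1 / (2 ^ n * n.factorial : ℝ)) * derivative^[n] ((X ^ 2 - 1) ^ n)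

/-- A Legendre multiplier sequence. -/
def IsLegendreMS (γ : ℕ → ℝ) : Prop := IsMultiplierSeqFor legendre γ

set_option linter.unusedSimpArgs false

lemma hyp_splits {p : ℝ[X]} (h : Hyperbolic p) : p.Splits := by
  refine Splits.of_splits_map (algebraMap ℝ ℂ) (IsAlgClosed.splits _) ?_
  intro z hz
  exact ⟨z.re, by apply Complex.ext <;> simp [h z hz]⟩

lemma splits_hyp {p : ℝ[X]} (h : p.Splits) : Hyperbolic p := by
  intro z hz
  rw [h.roots_map] at hz
  obtain ⟨r, -, rfl⟩ := Multiset.mem_map.1 hz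
  simp

lemma laguerre_prod (s : Multiset ℝ) (x : ℝ) :
    0 ≤ (derivative (s.map (fun a => X - C a)).prod).eval x ^ 2 -
      ((s.map (fun a => X - C a)).prod).eval x *
      (derivative (derivative (s.map (fun a => X - C a)).prod)).eval x := by
  induction s using Multiset.induction with
  | empty => simp
  | cons r s ih =>
    rw [Multiset.map_cons, Multiset.prod_cons]
    set P := (s.map (fun a => X - C a)).prod
    simp only [derivative_mul, derivative_sub, derivative_X, derivative_C, derivative_add,
      eval_add, eval_mul, eval_sub, eval_X, eval_C, eval_one, sub_zero, one_mul, derivative_one]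
    have h2 := mul_nonneg (sq_nonneg (x - r)) ih
    nlinarith [sq_nonneg (P.eval x)]

lemma laguerre {p : ℝ[X]} (h : Hyperbolic p) (x : ℝ) :
    0 ≤ (derivative p).eval x ^ 2 - p.eval x * (derivative (derivative p)).eval x := by
  have h1 := (hyp_splits h).eq_prod_roots
  have h2 := laguerre_prod p.roots x
  rw [h1]
  set P := (p.roots.map (fun a => X - C a)).prod
  simp only [derivative_C_mul, eval_mul, eval_C]
  nlinarith [mul_nonneg (sq_nonneg p.leadingCoeff) h2]

noncomputable def TT (β : ℝ) (p : ℝ[X]) : ℝ[X] :=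
  (X ^ 2 - 1) * derivative (derivative p) + 2 * X * derivative p + C β * p

lemma cs_step {A B E c : ℝ} (x y : ℝ) (hA : 0 ≤ A) (hB : 0 ≤ B) (hE : E ^ 2 ≤ A * B)
    (hc : 0 ≤ c) : (E + c * (x * y)) ^ 2 ≤ (A + c * x ^ 2) * (B + c * y ^ 2) := by
  have key : 2 * E * (x * y) ≤ A * y ^ 2 + B * x ^ 2 := by
    have h0 : 0 ≤ A * y ^ 2 + B * x ^ 2 := by positivity
    refine abs_le_of_sq_le_sq' ?_ h0 |>.2
    nlinarith [sq_nonneg (A * y ^ 2 - B * x ^ 2), mul_le_mul_of_nonneg_right hE (sq_nonneg (x * y))]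
  nlinarith [mul_le_mul_of_nonneg_left key hc]

lemma lorentz {t1 t2 A B E : ℝ} (hA : 0 ≤ A) (hB : 0 ≤ B) (hE : E ^ 2 ≤ A * B)
    (h1 : t1 * t2 = E) (h2 : t1 ^ 2 - t2 ^ 2 = A - B) (h3 : B < t2 ^ 2) : False := by
  have h4 : A < t1 ^ 2 := by linarith
  have h5 : A * B < t1 ^ 2 * t2 ^ 2 := by
    have : 0 < t2 ^ 2 := by linarith
    nlinarith
  rw [← h1] at hE
  nlinarith

lemma inv_im_pos {w : ℂ} (hw : 0 < w.im) : 0 < (-w⁻¹).im := by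
  have : w ≠ 0 := by rintro rfl; simp at hw
  have h2 : 0 < Complex.normSq w := Complex.normSq_pos.2 this
  rw [Complex.neg_im, Complex.inv_im, neg_div, neg_neg]
  positivity

lemma struct_prod (s : Multiset ℝ) {z : ℂ} (hz : 0 < z.im) :
    aeval z (s.map (fun a => X - C a)).prod ≠ 0 ∧
    ∃ (a : ℂ) (A B E : ℝ), 0 ≤ A ∧ 0 ≤ B ∧ E ^ 2 ≤ A * B ∧ 0 ≤ a.im ∧ (s ≠ 0 → 0 < a.im) ∧
      B ≤ a.im ^ 2 ∧
      aeval z (derivative (s.map (fun a => X - C a)).prod) =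
        -a * aeval z (s.map (fun a => X - C a)).prod ∧
      aeval z (derivative (derivative (s.map (fun a => X - C a)).prod)) =
        (a ^ 2 - ⟨A - B, 2 * E⟩) * aeval z (s.map (fun a => X - C a)).prod := by
  induction s using Multiset.induction with
  | empty => exact ⟨by simp, 0, 0, 0, 0, by simp [Complex.ext_iff]⟩
  | cons r s ih =>
    obtain ⟨h0, a, A, B, E, hA, hB, hE, ha, -, hBa, h1, h2⟩ := ih
    rw [Multiset.map_cons, Multiset.prod_cons]
    set P := (s.map (fun a => X - C a)).prod
    have hw : 0 < (z - r).im := by simpa using hz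
    have hw0 : z - r ≠ 0 := by intro h; rw [h] at hw; simp at hw
    have hv := inv_im_pos hw
    set v := -(z - r)⁻¹ with hvdef
    have hvw : (z - r) * v = -1 := by rw [hvdef]; field_simp
    refine ⟨?_, a + v, A + 1 * v.re ^ 2, B + 1 * v.im ^ 2, E + 1 * (v.re * v.im),
      by positivity, by positivity, cs_step _ _ hA hB hE zero_le_one, ?_, ?_, ?_, ?_, ?_⟩
    · simp only [map_mul, map_sub, aeval_X, aeval_C]
      exact mul_ne_zero hw0 h0
    · rw [Complex.add_im]; positivity
    · intro _; rw [Complex.add_im]; positivity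
    · rw [Complex.add_im]; nlinarith
    · simp only [derivative_mul, derivative_sub, derivative_X, derivative_C, derivative_add,
        map_add, map_mul, map_sub, aeval_X, aeval_C, sub_zero, one_mul, h1,
        Complex.coe_algebraMap]
      linear_combination (aeval z P) * hvw
    · have hb : (⟨A + 1 * v.re ^ 2 - (B + 1 * v.im ^ 2), 2 * (E + 1 * (v.re * v.im))⟩ : ℂ) =
          ⟨A - B, 2 * E⟩ + v ^ 2 := by
        apply Complex.ext <;> simp [pow_two] <;> ring
      rw [hb]
      simp only [derivative_mul, derivative_sub, derivative_X, derivative_C, derivative_add,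
        map_add, map_mul, map_sub, aeval_X, aeval_C, sub_zero, one_mul, h1, h2, derivative_one,
        map_zero, zero_mul, zero_add, Complex.coe_algebraMap]
      linear_combination (-2 * a * aeval z P) * hvw

lemma TT_ne {β : ℝ} (hβ0 : 0 ≤ β) (hβ1 : β ≤ 1) {p : ℝ[X]} (hp : Hyperbolic p)
    (hT : TT β p ≠ 0) {z : ℂ} (hz : 0 < z.im) : aeval z (TT β p) ≠ 0 := by
  intro h
  have e := (hyp_splits hp).eq_prod_roots
  have hc : p.leadingCoeff ≠ 0 := by
    intro hc
    rw [leadingCoeff_eq_zero] at hc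
    apply hT; simp [TT, hc]
  obtain ⟨h0, a, A, B, E, hA, hB, hE, ha, ha', hBa, h1, h2⟩ := struct_prod p.roots hz
  have hpos : 0 < a.im ∨ 0 < β := by
    by_cases hs : p.roots = 0
    · right
      rcases hβ0.lt_or_eq with hb | hb
      · exact hb
      · exfalso; apply hT
        rw [e, hs, ← hb]; simp [TT]
    · exact Or.inl (ha' hs)
  rw [e] at h
  set P := (p.roots.map (fun a => X - C a)).prod
  simp only [TT, derivative_C_mul, map_add, map_mul, map_sub, map_pow, aeval_X, aeval_C, h1, h2,
    map_one, map_ofNat, Complex.coe_algebraMap] at h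
  have hc' : (p.leadingCoeff : ℂ) ≠ 0 := by exact_mod_cast hc
  have h3 : (z ^ 2 - 1) * (a ^ 2 - ⟨A - B, 2 * E⟩) - 2 * z * a + β = 0 := by
    apply mul_left_cancel₀ (mul_ne_zero hc' h0)
    linear_combination h
  have hw1 : 0 < (z - 1).im := by simpa using hz
  have hw2 : 0 < (z + 1).im := by simpa using hz
  have hn1 : z - 1 ≠ 0 := by intro h; rw [h] at hw1; simp at hw1
  have hn2 : z + 1 ≠ 0 := by intro h; rw [h] at hw2; simp at hw2
  have hG := inv_im_pos hw1
  have hH := inv_im_pos hw2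
  have h4 : (a ^ 2 - ⟨A - B, 2 * E⟩) + a * (-(z - 1)⁻¹ + -(z + 1)⁻¹)
      + β * (-(z - 1)⁻¹ * -(z + 1)⁻¹) = 0 := by
    field_simp
    linear_combination h3
  set G := -(z - 1)⁻¹
  set H := -(z + 1)⁻¹
  have hre := congrArg Complex.re h4
  have him := congrArg Complex.im h4
  simp [pow_two] at hre him
  have hb' : 0 ≤ 1 - β := by linarith
  have c1 := cs_step ((G.re + H.re) / 2) ((G.im + H.im) / 2) hA hB hE hb'
  have c2 := cs_step ((G.re - H.re) / 2) ((G.im - H.im) / 2) (by positivity) (by positivity) c1 hβ0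
  refine lorentz (t1 := a.re + (G.re + H.re) / 2) (t2 := a.im + (G.im + H.im) / 2)
    (by positivity) (by positivity) c2 ?_ ?_ ?_
  · linear_combination him / 2
  · linear_combination hre
  · have h6 : 0 < a.im * (G.im + H.im) + β * (G.im * H.im) := by
      rcases hpos with h | h
      · have : 0 ≤ β * (G.im * H.im) := by positivity
        have : 0 < a.im * (G.im + H.im) := by positivity
        linarith
      · have : 0 < β * (G.im * H.im) := by positivity
        have : 0 ≤ a.im * (G.im + H.im) := by positivity
        linarith
    nlinarith

lemma TT_hyp {β : ℝ} (hβ0 : 0 ≤ β) (hβ1 : β ≤ 1) {p : ℝ[X]} (hp : Hyperbolic p) :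
    Hyperbolic (TT β p) := by
  intro z hz
  by_cases hT : TT β p = 0
  · simp [hT] at hz
  have hr : aeval z (TT β p) = 0 := by
    have := (mem_roots'.1 hz).2
    rwa [IsRoot, eval_map_algebraMap] at this
  rcases lt_trichotomy z.im 0 with h | h | h
  · exfalso
    refine TT_ne hβ0 hβ1 hp hT (z := (starRingEnd ℂ) z) (by simpa using h) ?_
    rw [aeval_conj, hr, map_zero]
  · exact h
  · exact absurd hr (TT_ne hβ0 hβ1 hp hT h)

lemma rod_ode (n m : ℕ) :
    (X ^ 2 - 1) * derivative^[m + 2] (((X : ℝ[X]) ^ 2 - 1) ^ n) +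
      2 * ((m : ℝ[X]) + 1 - (n : ℝ[X])) * X * derivative^[m + 1] ((X ^ 2 - 1) ^ n) +
      ((m : ℝ[X]) + 1) * ((m : ℝ[X]) - 2 * (n : ℝ[X])) * derivative^[m] ((X ^ 2 - 1) ^ n) = 0 := by
  induction m with
  | zero =>
    have h : (X ^ 2 - 1) * derivative (((X : ℝ[X]) ^ 2 - 1) ^ n) =
        2 * (n : ℝ[X]) * X * (X ^ 2 - 1) ^ n := by
      rcases n with _ | n
      · simp
      · rw [derivative_pow]
        simp
        ring
    have h' := congrArg derivative h
    simp [derivative_mul] at h'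
    simp
    linear_combination h'
  | succ m ih =>
    have h' := congrArg derivative ih
    simp only [derivative_add, derivative_mul, derivative_sub, derivative_X, derivative_natCast,
      derivative_one, derivative_X_pow, derivative_ofNat, derivative_zero,
      ← Function.iterate_succ_apply' derivative] at h'
    simp only [Nat.succ_eq_add_one] at h'
    push_cast
    push_cast at h'
    simp only [C_ofNat, Nat.cast_ofNat, map_ofNat] at h'
    rw [show m + 1 + 2 = m + 2 + 1 from rfl, show m + 1 + 1 = m + 2 from rfl]
    linear_combination h'

lemma legendre_ode (n : ℕ) : (X ^ 2 - 1) * derivative (derivative (legendre n)) +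
    2 * X * derivative (legendre n) = C ((n : ℝ) ^ 2 + n) * legendre n := by
  have h := rod_ode n n
  rw [Function.iterate_succ_apply', Function.iterate_succ_apply'] at h
  simp only [legendre, derivative_C_mul]
  have e : (C ((n : ℝ) ^ 2 + n) : ℝ[X]) = (n : ℝ[X]) ^ 2 + n := by simp
  rw [e]
  linear_combination C (1 / (2 ^ n * n.factorial : ℝ)) * h

lemma TT_sum (β : ℝ) (n : ℕ) (a : ℕ → ℝ) :
    ∑ k ∈ Finset.range n, C (((k : ℝ) ^ 2 + 1 * k + β) * a k) * legendre k =
      TT β (∑ k ∈ Finset.range n, C (a k) * legendre k) := by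
  simp only [TT, derivative_sum, Finset.mul_sum, ← Finset.sum_add_distrib, derivative_C_mul]
  refine Finset.sum_congr rfl fun k _ => ?_
  have h := legendre_ode k
  simp only [C_mul, C_add, one_mul] at h ⊢
  linear_combination (-C (a k)) * h

lemma legendre_natDegree_le (n : ℕ) : (legendre n).natDegree ≤ n := by
  refine (natDegree_C_mul_le _ _).trans ((natDegree_iterate_derivative _ _).trans ?_)
  have : (((X : ℝ[X]) ^ 2 - 1) ^ n).natDegree ≤ n * 2 := by
    refine natDegree_pow_le.trans (Nat.mul_le_mul_left _ ?_)
    compute_degree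
  omega

lemma legendre_coeff (n : ℕ) : (legendre n).coeff n ≠ 0 := by
  have h1 : (((X : ℝ[X]) ^ 2 - 1) ^ n).coeff (n + n) = 1 := by
    have hm : ((X : ℝ[X]) ^ 2 - 1).Monic := by
      simpa using monic_X_pow_sub_C (1 : ℝ) two_ne_zero
    have hd : ((X : ℝ[X]) ^ 2 - 1).natDegree = 2 := by
      simpa using natDegree_X_pow_sub_C (n := 2) (r := (1 : ℝ))
    have := (hm.pow n).coeff_natDegree
    rw [hm.natDegree_pow, hd] at this
    rwa [← mul_two]
  rw [legendre, coeff_C_mul, coeff_iterate_derivative, h1]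
  have : ((n + n).descFactorial n : ℝ) ≠ 0 := by
    have : 0 < (n + n).descFactorial n := by
      rw [Nat.pos_iff_ne_zero, Ne, Nat.descFactorial_eq_zero_iff_lt]; omega
    positivity
  have : (1 / (2 ^ n * n.factorial : ℝ)) ≠ 0 := by positivity
  simp_all

lemma expand (n : ℕ) : ∀ p : ℝ[X], p.degree < n →
    ∃ a : ℕ → ℝ, p = ∑ k ∈ Finset.range n, C (a k) * legendre k := by
  induction n with
  | zero => intro p hp; exact ⟨0, by simpa using hp⟩
  | succ n ih =>
    intro p hp
    set c := p.coeff n / (legendre n).coeff n with hc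
    obtain ⟨a, ha⟩ := ih (p - C c * legendre n) (by
      rw [degree_lt_iff_coeff_zero]
      intro m hm
      rw [coeff_sub, coeff_C_mul]
      rcases hm.eq_or_lt with rfl | hm
      · rw [hc, div_mul_cancel₀ _ (legendre_coeff _), sub_self]
      · rw [coeff_eq_zero_of_degree_lt, coeff_eq_zero_of_natDegree_lt
          ((legendre_natDegree_le n).trans_lt hm)]
        · simp
        · exact hp.trans_le (by exact_mod_cast hm))
    refine ⟨fun k => if k = n then c else a k, ?_⟩
    rw [Finset.sum_range_succ]
    have : ∑ k ∈ Finset.range n, C (if k = n then c else a k) * legendre k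
        = ∑ k ∈ Finset.range n, C (a k) * legendre k := by
      refine Finset.sum_congr rfl fun k hk => ?_
      rw [if_neg (Finset.mem_range.1 hk).ne]
    simp only [if_true]
    rw [this, ← ha]; ring

lemma ms_TT {β : ℝ} (h : IsLegendreMS (fun k => (k : ℝ) ^ 2 + 1 * k + β)) {p : ℝ[X]}
    (hp : Hyperbolic p) : Hyperbolic (TT β p) := by
  obtain ⟨a, ha⟩ := expand (p.natDegree + 1) p (by
    exact_mod_cast degree_le_natDegree.trans_lt (by exact_mod_cast Nat.lt_succ_self _))
  have := h _ a (ha ▸ hp)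
  simp only [] at this
  rwa [TT_sum, ← ha] at this

lemma le0 : legendre 0 = 1 := by simp [legendre]

lemma le2 : legendre 2 = C (3 / 2) * X ^ 2 - C (1 / 2) := by
  have e : ((X : ℝ[X]) ^ 2 - 1) ^ 2 = X ^ 4 - C 2 * X ^ 2 + C 1 := by
    simp only [map_ofNat, map_one]; ring
  rw [legendre, e]
  simp only [Function.iterate_succ, Function.iterate_zero, Function.comp, id, derivative_add,
    derivative_sub, derivative_C_mul, derivative_X_pow, derivative_C]
  refine Polynomial.funext fun x => ?_
  simp [Nat.factorial]
  ring

lemma le4 : legendre 4 = C (35 / 8) * X ^ 4 - C (30 / 8) * X ^ 2 + C (3 / 8) := by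
  have e : ((X : ℝ[X]) ^ 2 - 1) ^ 4 = X ^ 8 - C 4 * X ^ 6 + C 6 * X ^ 4 - C 4 * X ^ 2 + C 1 := by
    simp only [map_ofNat, map_one]; ring
  rw [legendre, e]
  simp only [Function.iterate_succ, Function.iterate_zero, Function.comp, id, derivative_add,
    derivative_sub, derivative_C_mul, derivative_X_pow, derivative_C]
  refine Polynomial.funext fun x => ?_
  simp [Nat.factorial]
  ring

lemma le6 : legendre 6 = C (231 / 16) * X ^ 6 - C (315 / 16) * X ^ 4 + C (105 / 16) * X ^ 2
    - C (5 / 16) := by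
  have e : ((X : ℝ[X]) ^ 2 - 1) ^ 6 = X ^ 12 - C 6 * X ^ 10 + C 15 * X ^ 8 - C 20 * X ^ 6
      + C 15 * X ^ 4 - C 6 * X ^ 2 + C 1 := by
    simp only [map_ofNat, map_one]; ring
  rw [legendre, e]
  simp only [Function.iterate_succ, Function.iterate_zero, Function.comp, id, derivative_add,
    derivative_sub, derivative_C_mul, derivative_X_pow, derivative_C]
  refine Polynomial.funext fun x => ?_
  simp [Nat.factorial]
  ring

lemma alpha_eq {α β : ℝ} (h : IsLegendreMS (fun k => (k : ℝ) ^ 2 + α * k + β)) : α = 1 := by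
  let a : ℕ → ℝ := fun k => if k = 0 then 1 / 7 else if k = 2 then 10 / 21 else
    if k = 4 then 24 / 77 else if k = 6 then 16 / 231 else 0
  have e : ∑ k ∈ Finset.range 7, C (a k) * legendre k = X ^ 6 := by
    simp only [Finset.sum_range_succ, Finset.sum_range_zero, a]
    simp only [le0, le2, le4, le6]
    refine Polynomial.funext fun x => ?_
    simp
    ring
  have h1 := h 7 a (by rw [e]; exact splits_hyp (Splits.X_pow 6))
  have e2 : ∑ k ∈ Finset.range 7, C ((fun k : ℕ => (k : ℝ) ^ 2 + α * k + β) k * a k) * legendre k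
      = C (36 + 6 * α + β) * X ^ 6
        + C (15 / 11 * (16 + 4 * α + β) - 15 / 11 * (36 + 6 * α + β)) * X ^ 4
        + C (-120 / 231 * (α - 1)) * X ^ 2 + C (-32 / 231 * (α - 1)) := by
    simp only [Finset.sum_range_succ, Finset.sum_range_zero, a]
    simp only [le0, le2, le4, le6]
    refine Polynomial.funext fun x => ?_
    simp
    ring
  rw [e2] at h1
  have h2 := laguerre h1 0
  simp only [derivative_add, derivative_C_mul, derivative_X_pow, derivative_C] at h2
  simp at h2
  nlinarith [sq_nonneg (α - 1)]

lemma beta_nonneg {β : ℝ} (h : ∀ p, Hyperbolic p → Hyperbolic (TT β p)) : 0 ≤ β := by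
  by_contra! hb
  have h1 := laguerre (h (X ^ 2) (splits_hyp (Splits.X_pow 2))) 0
  simp [TT] at h1
  have h2 := laguerre (h ((X - C √(-3 / β)) * (X + C √(-3 / β)))
    (splits_hyp ((Splits.X_sub_C _).mul (Splits.X_add_C _)))) 0
  have hs : √(-3 / β) * √(-3 / β) = -3 / β := Real.mul_self_sqrt (by
    rw [← neg_div_neg_eq]; apply div_nonneg <;> linarith)
  have e : (X - C √(-3 / β)) * (X + C √(-3 / β)) = X ^ 2 - C (-3 / β) := by
    have hs' := congrArg C hs
    rw [C_mul] at hs'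
    linear_combination -hs'
  rw [e] at h2
  simp [TT] at h2
  have hb0 : β * (-3 / β) = -3 := by field_simp [hb.ne]
  rw [hb0] at h2
  have hb6 : β = -6 := by linarith
  subst hb6
  have h3 := laguerre (h (X * X * ((X - C √2) * (X + C √2)))
    (splits_hyp ((Splits.X.mul Splits.X).mul
      ((Splits.X_sub_C _).mul (Splits.X_add_C _))))) (2 / 3)
  have e : X * X * ((X - C √2) * (X + C √2)) = X ^ 4 - C 2 * X ^ 2 := by
    have : (C 2 : ℝ[X]) = C √2 * C √2 := by rw [← C_mul]; simp
    rw [this]; ring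
  rw [e] at h3
  simp [TT] at h3
  norm_num at h3

lemma quad_disc {A B K : ℝ} (hA : 0 < A)
    (h : Hyperbolic (C A * X ^ 2 + C (2 * B) * X + C K)) : A * K ≤ B ^ 2 := by
  have h2 := laguerre h (-B / A)
  simp only [derivative_add, derivative_C_mul, derivative_X_pow, derivative_C, derivative_X] at h2
  simp at h2
  have e1 : (A * (2 * (-B / A)) + 2 * B) = 0 := by field_simp; ring
  have e2 : (A * (-B / A) ^ 2 + 2 * B * (-B / A) + K) * (A * 2) = 2 * (A * K - B ^ 2) := by
    field_simp; ring
  rw [e1, e2] at h2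
  nlinarith

lemma beta_le {β : ℝ} (h : ∀ p, Hyperbolic p → Hyperbolic (TT β p)) : β ≤ 1 := by
  by_contra! hb
  obtain ⟨n, hn⟩ := exists_nat_gt (2 / (β - 1))
  have hb1 : 0 < β - 1 := by linarith
  rw [div_lt_iff₀ hb1] at hn
  -- exponent N = n + 2
  set N : ℝ := (n : ℝ) + 2 with hN
  have hn0 : (0 : ℝ) ≤ n := by positivity
  have hd : 0 < N * (β * N - β - N) := by
    apply mul_pos <;> nlinarith
  set D := N * (β * N - β - N) with hD
  obtain ⟨c, hc1, hc⟩ : ∃ c : ℝ, 1 ≤ c ∧ (N ^ 2 + N + β) * (N * (N - 1)) < c ^ 2 * D := by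
    obtain ⟨m, hm⟩ := exists_nat_gt ((N ^ 2 + N + β) * (N * (N - 1)) / D)
    rw [div_lt_iff₀ hd] at hm
    refine ⟨m + 1, by simp, hm.trans_le ?_⟩
    apply mul_le_mul_of_nonneg_right _ hd.le
    have : (0 : ℝ) ≤ m := by positivity
    nlinarith
  have h1 := h ((X + C c) ^ (n + 2)) (splits_hyp ((Splits.X_add_C c).pow _))
  set A := N ^ 2 + N + β with hA
  have hA0 : 0 < A := by rw [hA]; positivity
  set Q : ℝ[X] := C A * X ^ 2 + C (2 * ((N + β) * c)) * X + C (β * c ^ 2 - N * (N - 1)) with hQ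
  have e : TT β ((X + C c) ^ (n + 2)) = (X + C c) ^ n * Q := by
    have hNX : C N = (n : ℝ[X]) + 2 := by rw [hN, C_add, map_natCast]; rfl
    rw [hQ, hA, TT]
    simp only [derivative_pow, derivative_mul, derivative_add, derivative_X, derivative_C, C_add, C_mul, C_sub, C_pow, hNX, map_ofNat, map_natCast, derivative_natCast, map_one, Nat.cast_add, Nat.cast_ofNat, derivative_ofNat, Nat.add_sub_cancel]
    rw [show n + 2 - 1 = n + 1 from rfl]
    simp only [Nat.add_sub_cancel, Nat.cast_add, Nat.cast_one, derivative_one, derivative_zero, map_natCast, map_add, map_one]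
    have h2 : (C 2 : ℝ[X]) = 2 := rfl
    try simp only [h2]
    ring
  have hQ0 : Q ≠ 0 := by
    intro h0
    have := congrArg (fun p => coeff p 2) h0
    simp only [hQ, coeff_add, coeff_C_mul, coeff_C, coeff_X_pow, coeff_X] at this
    norm_num at this
    exact hA0.ne' this
  have hQh : Hyperbolic Q := by
    apply splits_hyp
    refine (hyp_splits h1).of_dvd ?_ (e ▸ Dvd.intro_left _ rfl)
    rw [e]
    exact mul_ne_zero (pow_ne_zero _ (X_add_C_ne_zero c)) hQ0
  have h2 := quad_disc hA0 hQh
  have h3 : A * (β * c ^ 2 - N * (N - 1)) - ((N + β) * c) ^ 2 = c ^ 2 * D - A * (N * (N - 1)) := by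
    rw [hA, hD]; ring
  linarith

theorem stmt_18 (α β : ℝ) :
    IsLegendreMS (fun k => (k : ℝ) ^ 2 + α * k + β) ↔
      (α = 1 ∧ 0 ≤ β ∧ β ≤ 1) := by
  constructor
  · intro h
    obtain rfl := alpha_eq h
    exact ⟨rfl, beta_nonneg fun p hp => ms_TT h hp, beta_le fun p hp => ms_TT h hp⟩
  · rintro ⟨rfl, h0, h1⟩ n a hp
    simp only []
    rw [TT_sum]
    exact TT_hyp h0 h1 hp
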